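/- Let V be a torsion-free FI-module generated in degree ≤ d such that I_{K+1}·V_n = 0 for all n. Then for all n > K + d and every a ≤ n, one has V_{[n]−{1}} + ⋯ + V_{[n]−{a}} = ker( J̃_{[a]} : V_n → V_{[n]⊔[⋆_a]} ), where the V_{[n]−{i}} are regarded as subgroups of V_n via the inclusions [n]−{i} ⊆ [n]. -/

import Mathlib

/-!
Torsion-freeness embeds `V_n` and `V_{[n] ⊔ [⋆_a]}` in `M = V_Ω` for `Ω = {-n, …, n}`, the star `⋆_i`
being `-i`. The whole argument takes place in `M` with its action of the permutations of `Ω` and its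
subgroups `V_T`, `T ⊆ Ω`; this is the notion `PermSystem`. The operator `J̃_{[a]}` becomes the
product `J` of the factors `id - (i ⋆_i)`. A factor `id - (x y)` kills `V_T` as soon as `x, y ∉ T`,
which gives the inclusion of the sum in the kernel.

For the converse, call `C ⊆ [n]` dense at level `m` if for some `i < m` it has more than `i` elements
in `{1, …, 2i + 1}`, and let `denseSum m` be the sum of the `V_{[n] - C}` over such `C`. A set `C` that
is not dense can be matched with smaller elements outside it (`Labelling.exists_matching`). If the
product of the `id - (x y)` over the matched pairs kills `v ∈ V_{[n] - C}`, expanding that product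
rewrites `v` through sets `C'` with smaller sum of elements (`PermSystem.straighten`). By induction
on that sum:

* as `I_{K+1}` kills everything, and `n ≥ K + 1 + d` lets each generator of `V_n` miss `K + 1` points,
  `V_n = denseSum (K + 1)` (`mem_denseSum_of_ann`);
* if `C ⊆ {1, …, 2m + 1}` has `m + 1` elements, and `v ∈ V_{[n] - C}` is killed by the product of the
  `id - (i ⋆_i)` over `i ∈ {1, …, 2m + 1} - C`, then `v ∈ denseSum m` (`mem_denseSum_of_killed`). The
  matched partners may replace the stars here, because both lie outside `[n] - C`
  (`J_transfer`).

An element of `ker J̃_{[a]}` then descends from `denseSum (m + 1)` to `denseSum m` modulo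
`V_{[n] - {1}} + ⋯ + V_{[n] - {a}}` as long as `m ≥ a`: the product over `{1, …, 2m + 1} - C` contains
`J̃_{[a]}` and kills all summands but that of `C`, so that the second fact applies (`descent`). The
descent ends with `denseSum m`, `m ≤ a`, which lies in the sum in question because every dense set
meets `{1, …, a}`. It needs `2m + 1 ≤ n` for `m ≤ K`; this holds when `K ≤ d`, and otherwise `K` may be
replaced by `d`, since generation in degree `≤ d` forces `I_{d+1}` to act by zero
(`J_eq_zero_of_gen`).
-/


/-- An FI-module: a functor from the category of finite sets (modeled as finite
subsets of `ℤ`) and injections to abelian groups. -/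
structure FIModule where
  obj : Finset ℤ → Type
  [grp : ∀ T, AddCommGroup (obj T)]
  map : ∀ {S T : Finset ℤ}, (↥S ↪ ↥T) → (obj S →+ obj T)
  map_id : ∀ T : Finset ℤ, map (Function.Embedding.refl ↥T) = AddMonoidHom.id (obj T)
  map_comp : ∀ {S T U : Finset ℤ} (f : ↥S ↪ ↥T) (g : ↥T ↪ ↥U),
    map (f.trans g) = (map g).comp (map f)

attribute [instance] FIModule.grp

/-- The embedding of coercions induced by an inclusion of finite sets. -/
def inclEmb {S T : Finset ℤ} (h : S ⊆ T) : ↥S ↪ ↥T :=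
  ⟨fun x => ⟨x.1, h x.2⟩, fun a b hab => Subtype.ext (by simpa using congrArg Subtype.val hab)⟩

/-- An FI-module is torsion-free if all induced maps are injective. -/
def FIModule.TorsionFree (M : FIModule) : Prop :=
  ∀ {S T : Finset ℤ} (f : ↥S ↪ ↥T), Function.Injective (M.map f)

/-- An FI-module is generated in degree ≤ m if every `V_T` is spanned by the images
of the `V_S` with `|S| ≤ m`. -/
def FIModule.GenLE (V : FIModule) (m : ℕ) : Prop :=
  ∀ T : Finset ℤ, ∀ x : V.obj T,
    x ∈ AddSubgroup.closure {y : V.obj T |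
      ∃ (S : Finset ℤ) (f : ↥S ↪ ↥T) (v : V.obj S), S.card ≤ m ∧ y = V.map f v}

/-- A sub-FI-module of `M`: a subgroup of each `M_T`, compatible with all induced maps. -/
structure FIModule.Sub (M : FIModule) where
  sub : ∀ T : Finset ℤ, AddSubgroup (M.obj T)
  map_mem : ∀ {S T : Finset ℤ} (f : ↥S ↪ ↥T) {x : M.obj S}, x ∈ sub S → M.map f x ∈ sub T

/-- A sub-FI-module is generated in degree ≤ d if each `V_T` is spanned by the images
`f_*(V_S)` with `|S| ≤ d`. -/
def FIModule.Sub.GenLE {M : FIModule} (V : M.Sub) (d : ℕ) : Prop :=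
  ∀ T : Finset ℤ, V.sub T ≤ AddSubgroup.closure {y : M.obj T |
    ∃ (S : Finset ℤ) (f : ↥S ↪ ↥T) (v : M.obj S), S.card ≤ d ∧ v ∈ V.sub S ∧ y = M.map f v}

/-- Composition (in the given order) of a list of additive endomorphisms. -/
def compList {A : Type} [AddCommGroup A] : List (A →+ A) → (A →+ A)
  | [] => AddMonoidHom.id A
  | f :: l => f.comp (compList l)

/-- The operator `J^i_j = id − (i j)` of `ℤ[S_T]` acting on `V_T`, where the
transposition `(i j)` acts through the FI-module structure. -/
def FIModule.JOp (V : FIModule) (T : Finset ℤ) (i j : ↥T) : V.obj T →+ V.obj T :=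
  AddMonoidHom.id (V.obj T) - V.map (Equiv.swap i j).toEmbedding

/-- `I_m · V_n = 0` for all `n`: every generator `J^{i₁}_{j₁} ⋯ J^{i_m}_{j_m}` of the
two-sided ideal `I_m ⊆ ℤ[S_n]` (the `2m` indices pairwise distinct) annihilates
`V_n = V_{[n]}`.  Since the generating set is stable under conjugation and the group
elements act invertibly, this is equivalent to the two-sided ideal `I_m`
annihilating `V_n`. -/
def FIModule.AnnIdeal (V : FIModule) (m : ℕ) : Prop :=
  ∀ (n : ℕ) (ii jj : Fin m → ↥(Finset.Icc (1:ℤ) (n:ℤ))),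
    Function.Injective (Sum.elim ii jj) →
    compList (List.ofFn fun s : Fin m =>
      FIModule.JOp V (Finset.Icc (1:ℤ) (n:ℤ)) (ii s) (jj s)) = 0

/-- The operator `J̃_{[a]} = J_1^{⋆_1} ⋯ J_a^{⋆_a} ∘ ι_* : V_{[n]} → V_{[n] ⊔ [⋆_a]}`.
We take `[n] = {1,…,n} ⊆ ℤ` and `⋆_i = -i`, so that `[⋆_a] = {-a,…,-1}` is an
`a`-element set disjoint from `[n]`, and `ι : [n] ↪ [n] ⊔ [⋆_a]` is the inclusion. -/
noncomputable def FIModule.Jtilde (V : FIModule) (n a : ℕ) (ha : a ≤ n) :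
    V.obj (Finset.Icc 1 (n:ℤ)) →+
      V.obj (Finset.Icc 1 (n:ℤ) ∪ Finset.Icc (-(a:ℤ)) (-1)) :=
  (compList (List.ofFn fun s : Fin a =>
    FIModule.JOp V (Finset.Icc 1 (n:ℤ) ∪ Finset.Icc (-(a:ℤ)) (-1))
      ⟨((s : ℕ) : ℤ) + 1, by
        have hs := s.isLt
        simp only [Finset.mem_union, Finset.mem_Icc]
        left; omega⟩
      ⟨-(((s : ℕ) : ℤ) + 1), by
        have hs := s.isLt
        simp only [Finset.mem_union, Finset.mem_Icc]
        right; omega⟩)).comp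
    (V.map (inclEmb Finset.subset_union_left))

/-! ### Permutation systems and the operators `J` -/

/-- The formal shadow of a finite set `X` and the values of an FI-module `V` on its subsets, seen
inside `M = V_X`: the action `ρ` of the permutations of `X` on `M`, and for each `T ⊆ X` the
subgroup `F T` of `M` that is the image of `V_T`. The laws say that `F` is monotone and equivariant,
and that a permutation fixing `T` pointwise acts trivially on `F T`. -/
structure PermSystem (X M : Type) [DecidableEq X] [AddCommGroup M] where
  ρ : Equiv.Perm X →* AddMonoid.End M
  F : Finset X → AddSubgroup M
  mono : ∀ {S T : Finset X}, S ⊆ T → F S ≤ F T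
  equi : ∀ (σ : Equiv.Perm X) {T : Finset X} {v : M}, v ∈ F T → ρ σ v ∈ F (T.image σ)
  fix : ∀ (σ : Equiv.Perm X) {T : Finset X} {v : M}, v ∈ F T → (∀ x ∈ T, σ x = x) → ρ σ v = v

/-- The pairs `(x, f x)` with `x ∈ S` consist of `2 * #S` distinct elements. -/
def GoodPairing {X : Type} (S : Finset X) (f : X → X) : Prop :=
  Set.InjOn f S ∧ ∀ x ∈ S, f x ∉ S

theorem GoodPairing.mono {X : Type} {S S' : Finset X} {f : X → X} (hf : GoodPairing S f) (h : S' ⊆ S) :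
    GoodPairing S' f :=
  ⟨hf.1.mono (by exact_mod_cast h), fun x hx h' => hf.2 x (h hx) (h h')⟩

namespace PermSystem

open Equiv Finset

variable {X M : Type} [DecidableEq X] [AddCommGroup M] (P : PermSystem X M)

theorem end_mul_apply (φ ψ : AddMonoid.End M) (v : M) : (φ * ψ) v = φ (ψ v) := rfl

/-- The operator `id - (x y)` on `M`. -/
noncomputable def J1 (x y : X) : AddMonoid.End M := 1 - P.ρ (swap x y)

/-- The product over `x ∈ S` of the operators `id - (x (f x))`, taken in an arbitrary fixed order;
for a good pairing the factors commute (see `J_eq_prod`). -/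
noncomputable def J (S : Finset X) (f : X → X) : AddMonoid.End M :=
  (S.toList.map fun x => P.J1 x (f x)).prod

/-- The kernel of `P.J S f`. -/
noncomputable def Jker (S : Finset X) (f : X → X) : AddSubgroup M :=
  AddMonoidHom.ker (show M →+ M from P.J S f)

theorem mem_Jker {S : Finset X} {f : X → X} {v : M} : v ∈ P.Jker S f ↔ P.J S f v = 0 := Iff.rfl

theorem J1_apply (x y : X) (v : M) : P.J1 x y v = v - P.ρ (swap x y) v := rfl

theorem J1_commute {x y z t : X} (h : [x, y, z, t].Nodup) : Commute (P.J1 x y) (P.J1 z t) := by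
  have : Commute (P.ρ (swap x y)) (P.ρ (swap z t)) :=
    (Perm.disjoint_swap_swap h).commute.map P.ρ
  unfold J1
  exact ((Commute.one_left _).sub_left ((Commute.one_right _).sub_right this))

theorem ρ_mul_J1 (σ : Perm X) (x y : X) : P.ρ σ * P.J1 x y = P.J1 (σ x) (σ y) * P.ρ σ := by
  unfold J1
  rw [mul_sub, sub_mul, ← map_mul, ← map_mul, mul_swap_eq_swap_mul, mul_one, one_mul]

theorem ρ_mul_prod (σ : Perm X) (f g : X → X) (l : List X) :
    P.ρ σ * (l.map fun x => P.J1 (f x) (g x)).prod =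
      (l.map fun x => P.J1 (σ (f x)) (σ (g x))).prod * P.ρ σ := by
  induction l with
  | nil => simp
  | cons a l ih =>
    simp only [List.map_cons, List.prod_cons]
    rw [← mul_assoc, ρ_mul_J1, mul_assoc, ih, mul_assoc]

/-- For a good pairing the order of the factors in `P.J S f` does not matter, as disjoint
transpositions commute. -/
theorem J_eq_prod {S : Finset X} {f : X → X} (hf : GoodPairing S f) {l : List X}
    (hl : l.Nodup) (hS : l.toFinset = S) : P.J S f = (l.map fun x => P.J1 x (f x)).prod := by
  have hp : S.toList.Perm l := by
    subst hS
    apply (List.perm_ext_iff_of_nodup (Finset.nodup_toList _) hl).2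
    simp
  refine (hp.map _).prod_eq' ?_
  rw [List.pairwise_map]
  refine (List.Nodup.pairwise_of_forall_ne (Finset.nodup_toList S) ?_)
  intro a ha b hb hab
  simp only [Finset.mem_toList] at ha hb
  apply P.J1_commute
  have h1 := hf.2 a ha
  have h2 := hf.2 b hb
  have h3 : f a ≠ f b := fun h => hab (hf.1 ha hb h)
  have h4 : a ≠ f a := by grind
  have h5 : b ≠ f b := by grind
  have h6 : a ≠ f b := by grind
  have h7 : f a ≠ b := by grind
  simp; tauto

/-- Conjugation by `σ` carries the pairs `(x, f x)` to the pairs `(σ x, σ (f x))`. -/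
theorem ρ_J {S : Finset X} {f : X → X} (hf : GoodPairing S f) (σ : Perm X) (g : X → X)
    (hg : ∀ x ∈ S, g (σ x) = σ (f x)) (v : M) :
    P.ρ σ (P.J S f v) = P.J (S.image σ) g (P.ρ σ v) := by
  have hgood : GoodPairing (S.image σ) g := by
    constructor
    · intro a ha b hb hab
      simp only [coe_image, Set.mem_image, mem_coe] at ha hb
      obtain ⟨a, ha, rfl⟩ := ha
      obtain ⟨b, hb, rfl⟩ := hb
      rw [hg a ha, hg b hb] at hab
      rw [hf.1 ha hb (σ.injective hab)]
    · intro a ha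
      simp only [mem_image] at ha ⊢
      obtain ⟨a, ha, rfl⟩ := ha
      rw [hg a ha]
      rintro ⟨b, hb, hab⟩
      exact hf.2 a ha (σ.injective hab ▸ hb)
  rw [P.J_eq_prod hgood (l := S.toList.map σ) ((Finset.nodup_toList S).map σ.injective)
    (by ext; simp)]
  have := congrArg (fun φ : AddMonoid.End M => φ v) (P.ρ_mul_prod σ id f S.toList)
  simp only [end_mul_apply, id] at this
  rw [J, this, List.map_map]
  refine congrArg (fun l : List (AddMonoid.End M) => l.prod (P.ρ σ v)) (List.map_congr_left ?_)
  intro x hx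
  simp only [Function.comp]
  rw [hg x (by simpa using hx)]

theorem J_congr {S : Finset X} {f g : X → X} (h : ∀ x ∈ S, f x = g x) : P.J S f = P.J S g := by
  refine congrArg List.prod (List.map_congr_left ?_)
  intro x hx
  rw [h x (by simpa using hx)]

/-- For `v` supported on `T ⊇ S`, the vanishing of `P.J S f v` does not depend on the choice of the
partners `f x` outside `T`: a permutation fixing `T` pointwise and sending each `f x` to `g x`
fixes `v` and conjugates one operator into the other. -/
theorem J_transfer [Fintype X] {S T : Finset X} {f g : X → X} {v : M} (hv : v ∈ P.F T) (hST : S ⊆ T)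
    (hf : Set.InjOn f S) (hg : Set.InjOn g S) (hfT : ∀ x ∈ S, f x ∉ T) (hgT : ∀ x ∈ S, g x ∉ T)
    (h0 : P.J S f v = 0) : P.J S g v = 0 := by
  have hext : ∃ σ : Perm X, (∀ x ∈ T, σ x = x) ∧ ∀ x ∈ S, σ (f x) = g x := by
    rcases S.eq_empty_or_nonempty with rfl | ⟨s, hs⟩
    · exact ⟨(1 : Perm X), by simp⟩
    have : Nonempty X := ⟨s⟩
    have hinv : ∀ x ∈ S, Function.invFunOn f S (f x) = x := fun x hx =>
      hf.leftInvOn_invFunOn hx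
    let h : X → X := fun y => if y ∈ T then y else g (Function.invFunOn f S y)
    have hT : ∀ x ∈ T, h x = x := fun x hx => if_pos hx
    have hS : ∀ x ∈ S, h (f x) = g x := fun x hx => by
      simp only [h, if_neg (hfT x hx), hinv x hx]
    obtain ⟨e, he⟩ := Finset.exists_equiv_extend_of_card_eq (α := X) (t := Finset.univ)
      (by simp) (s := T ∪ S.image f) (f := h) (Finset.subset_univ _) (by
        intro a ha b hb hab
        simp only [coe_union, coe_image, Set.mem_union, mem_coe, Set.mem_image] at ha hb
        rcases ha with ha | ⟨a, ha, rfl⟩ <;> rcases hb with hb | ⟨b, hb, rfl⟩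
        · rwa [hT a ha, hT b hb] at hab
        · rw [hT a ha, hS b hb] at hab
          exact absurd (hab ▸ ha) (hgT b hb)
        · rw [hT b hb, hS a ha] at hab
          exact absurd (hab ▸ hb) (hgT a ha)
        · rw [hS a ha, hS b hb] at hab
          rw [hg ha hb hab])
    refine ⟨e.trans (Equiv.subtypeUnivEquiv (by simp)), ?_, ?_⟩
    · intro x hx
      exact (he x (by simp [hx])).trans (hT x hx)
    · intro x hx
      exact (he (f x) (by simp only [mem_union, mem_image]; exact Or.inr ⟨x, hx, rfl⟩)).trans (hS x hx)
  obtain ⟨σ, hσT, hσf⟩ := hext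
  have h1 := P.ρ_J (S := S) (f := f) ⟨hf, fun x hx h => hfT x hx (hST h)⟩ σ g
    (fun x hx => by rw [hσT x (hST hx), hσf x hx]) v
  rw [h0, map_zero, P.fix σ hv hσT] at h1
  rw [h1]
  congr 2
  ext x
  simp only [mem_image]
  constructor
  · intro hx
    exact ⟨x, hx, hσT x (hST hx)⟩
  · rintro ⟨y, hy, rfl⟩
    rwa [hσT y (hST hy)]

/-- If some pair `{x, f x}` is disjoint from `T`, then its factor, and so the whole product, kills
`F T`. -/
theorem J_kill {S T : Finset X} {f : X → X} (hf : GoodPairing S f) {x : X} (hx : x ∈ S)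
    (hxT : x ∉ T) (hfT : f x ∉ T) : P.F T ≤ P.Jker S f := by
  intro v hv
  rw [mem_Jker, P.J_eq_prod hf (l := (S.erase x).toList ++ [x])]
  · simp only [List.map_append, List.map_cons, List.map_nil, List.prod_append, List.prod_cons,
      List.prod_nil, mul_one, end_mul_apply]
    rw [J1_apply, P.fix _ hv, sub_self, map_zero]
    intro y hy
    exact swap_apply_of_ne_of_ne (by rintro rfl; exact hxT hy) (by rintro rfl; exact hfT hy)
  · rw [List.nodup_append]
    refine ⟨Finset.nodup_toList _, by simp, ?_⟩
    simp
    tauto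
  · ext y
    simp
    grind

/-- Adding factors to the product enlarges its kernel, again because the factors commute. -/
theorem J_ker_mono {S S' : Finset X} {f : X → X} (hf : GoodPairing S f) (h : S' ⊆ S) :
    P.Jker S' f ≤ P.Jker S f := by
  intro v hv
  rw [mem_Jker] at hv ⊢
  rw [P.J_eq_prod hf (l := (S \ S').toList ++ S'.toList)]
  · rw [List.map_append, List.prod_append, end_mul_apply]
    exact (congrArg _ hv).trans (map_zero _)
  · rw [List.nodup_append]
    exact ⟨Finset.nodup_toList _, Finset.nodup_toList _, by simp⟩
  · ext y
    simp
    grind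

/-- Expanding `∏ (1 - (x (f x)))` shows that it differs from the identity by a signed sum of
non-empty products of the transpositions `(x (f x))`. -/
theorem prod_sub_mem (f : X → X) (l : List X) (v : M) :
    (l.map fun x => P.J1 x (f x)).prod v - v ∈ AddSubgroup.closure
      {w : M | ∃ l' : List X, l'.Sublist l ∧ l' ≠ [] ∧
        w = P.ρ (l'.map fun x => swap x (f x)).prod v} := by
  induction l with
  | nil => simp
  | cons a l ih =>
    have hle : AddSubgroup.closure {w : M | ∃ l' : List X, l'.Sublist l ∧ l' ≠ [] ∧
        w = P.ρ (l'.map fun x => swap x (f x)).prod v} ≤ AddSubgroup.closure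
        {w : M | ∃ l' : List X, l'.Sublist (a :: l) ∧ l' ≠ [] ∧
        w = P.ρ (l'.map fun x => swap x (f x)).prod v} := by
      apply AddSubgroup.closure_mono
      rintro w ⟨l', h1, h2, h3⟩
      exact ⟨l', h1.cons a, h2, h3⟩
    have hle' : AddSubgroup.closure {w : M | ∃ l' : List X, l'.Sublist l ∧ l' ≠ [] ∧
        w = P.ρ (l'.map fun x => swap x (f x)).prod v} ≤ (AddSubgroup.closure
        {w : M | ∃ l' : List X, l'.Sublist (a :: l) ∧ l' ≠ [] ∧
        w = P.ρ (l'.map fun x => swap x (f x)).prod v}).comap (P.ρ (swap a (f a))) := by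
      rw [AddSubgroup.closure_le]
      rintro w ⟨l', h1, h2, rfl⟩
      refine AddSubgroup.subset_closure ⟨a :: l', h1.cons_cons a, by simp, ?_⟩
      rw [List.map_cons, List.prod_cons, map_mul, end_mul_apply]
      rfl
    simp only [List.map_cons, List.prod_cons, end_mul_apply]
    set u := (l.map fun x => P.J1 x (f x)).prod v
    have e : P.J1 a (f a) u - v = (u - v) - P.ρ (swap a (f a)) (u - v) - P.ρ (swap a (f a)) v := by
      rw [J1_apply, map_sub]; abel
    rw [e]
    refine sub_mem (sub_mem (hle ih) (hle' ih)) ?_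
    exact AddSubgroup.subset_closure ⟨[a], by simp, by simp, by simp⟩

theorem swaps_fix (f : X → X) (l : List X) (y : X) (hy : y ∉ l) (hy' : ∀ x ∈ l, y ≠ f x) :
    (l.map fun x => swap x (f x)).prod y = y := by
  induction l with
  | nil => simp
  | cons a l ih =>
    simp only [List.mem_cons, not_or] at hy
    rw [List.map_cons, List.prod_cons, Perm.mul_apply, ih hy.2 (fun x hx => hy' x (by simp [hx]))]
    exact swap_apply_of_ne_of_ne hy.1 (hy' a (by simp))

/-- If each `x ∈ l` lies outside `C`, its partner `f x` lies in `C`, and `p x < p (f x)`, then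
swapping all these pairs lowers the potential `∑ c ∈ C, p c` by at least the number of swaps. -/
theorem swaps_pot (p : X → ℕ) (f : X → X) (l : List X) (hl : l.Nodup)
    (hf : GoodPairing l.toFinset f) (C : Finset X) (hC : ∀ x ∈ l, x ∉ C ∧ f x ∈ C ∧ p x < p (f x)) :
    (∑ c ∈ C.image (l.map fun x => swap x (f x)).prod, p c) + l.length ≤ ∑ c ∈ C, p c := by
  induction l with
  | nil => simp
  | cons a l ih =>
    have hl' := List.nodup_cons.1 hl
    have ih := ih hl'.2 (GoodPairing.mono hf (by intro x; simp; tauto))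
      (fun x hx => hC x (by simp [hx]))
    obtain ⟨ha1, ha2, ha3⟩ := hC a (by simp)
    set σ := (l.map fun x => swap x (f x)).prod with hσ
    have haf : σ (f a) = f a := by
      apply swaps_fix
      · intro h
        exact hf.2 a (by simp) (by simp [h])
      · intro x hx h
        have := hf.1 (by simp) (by simp [hx]) h
        exact hl'.1 (this ▸ hx)
    have haa : σ a = a := by
      apply swaps_fix
      · exact hl'.1
      · intro x hx h
        exact hf.2 x (by simp [hx]) (by simp [← h])
    have h1 : f a ∈ C.image σ := mem_image.2 ⟨f a, ha2, haf⟩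
    have h2 : a ∉ C.image σ := by
      intro h
      obtain ⟨y, hy, hya⟩ := mem_image.1 h
      have : y = a := σ.injective (hya.trans haa.symm)
      exact ha1 (this ▸ hy)
    have e : C.image ((a :: l).map fun x => swap x (f x)).prod
        = insert a ((C.image σ).erase (f a)) := by
      rw [List.map_cons, List.prod_cons, ← hσ]
      have : C.image (swap a (f a) * σ : Perm X) = (C.image σ).image (swap a (f a)) := by
        rw [Finset.image_image]; rfl
      rw [this]
      generalize C.image σ = D at *
      ext y
      simp only [mem_image, mem_insert, mem_erase]
      constructor
      · rintro ⟨z, hz, rfl⟩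
        grind
      · rintro (rfl | h)
        · exact ⟨f y, h1, by simp⟩
        · exact ⟨y, h.2, by grind⟩
    rw [e, sum_insert (by simp [h2])]
    have := Finset.add_sum_erase _ p h1
    simp only [List.length_cons]
    omega

/-- The straightening step: if `P.J S f v = 0`, then `v` is a signed sum of translates `P.ρ σ v`, each
of which replaces `C` by a set `C.image σ` of strictly smaller potential; so it suffices that these
translates lie in `N`. -/
theorem straighten (p : X → ℕ) {S C : Finset X} {f : X → X} (hf : GoodPairing S f)
    (hSC : ∀ x ∈ S, x ∉ C ∧ f x ∈ C ∧ p x < p (f x)) {v : M} (h0 : P.J S f v = 0)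
    (N : AddSubgroup M)
    (hN : ∀ σ : Perm X, (∀ y, y ∉ S → (∀ x ∈ S, y ≠ f x) → σ y = y) →
      ∑ c ∈ C.image σ, p c < ∑ c ∈ C, p c → P.ρ σ v ∈ N) : v ∈ N := by
  have h := P.prod_sub_mem f S.toList v
  change P.J S f v - v ∈ _ at h
  rw [h0, zero_sub, neg_mem_iff] at h
  refine (AddSubgroup.closure_le N).2 ?_ h
  rintro w ⟨l, hl, hne, rfl⟩
  have hmem : ∀ x ∈ l, x ∈ S := fun x hx => by simpa using hl.subset hx
  apply hN
  · intro y hy hy'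
    exact swaps_fix _ _ _ (fun h => hy (hmem y h)) (fun x hx => hy' x (hmem x hx))
  · have := swaps_pot p f l (hl.nodup (Finset.nodup_toList S))
      (GoodPairing.mono hf (by intro x hx; exact hmem x (by simpa using hx))) C
      (fun x hx => hSC x (hmem x hx))
    have : 0 < l.length := List.length_pos_iff.2 hne
    omega

end PermSystem

/-! ### Dense sets and matchings -/

/-- A copy of `{1, …, n}` inside `X` together with `n` further points, the stars. The position `p x` is
the label of `x` in `{1, …, n}`, with the value `0` for every point outside that copy; `star x` is
the star attached to `x`, meaningful only for `1 ≤ p x`. -/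
structure Labelling (X : Type) (n : ℕ) where
  p : X → ℕ
  star : X → X
  p_le : ∀ x, p x ≤ n
  p_inj : ∀ x y, 1 ≤ p x → p x = p y → x = y
  p_surj : ∀ k, 1 ≤ k → k ≤ n → ∃ x, p x = k
  p_star : ∀ x, p (star x) = 0 ∨ p x = 0
  star_inj : ∀ x y, 1 ≤ p x → 1 ≤ p y → star x = star y → x = y

namespace Labelling

open Finset

variable {X : Type} [DecidableEq X] [Fintype X] {n : ℕ} (L : Labelling X n)

/-- The initial segment `{1, …, k}`; for `k = n` the whole labelled copy of `{1, …, n}`. -/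
def seg (k : ℕ) : Finset X := Finset.univ.filter fun x => 1 ≤ L.p x ∧ L.p x ≤ k

omit [DecidableEq X] in
theorem mem_seg {k : ℕ} {x : X} : x ∈ L.seg k ↔ 1 ≤ L.p x ∧ L.p x ≤ k := by simp [seg]

omit [DecidableEq X] in
theorem seg_mono {k l : ℕ} (h : k ≤ l) : L.seg k ⊆ L.seg l := by
  intro x
  simp only [mem_seg]
  omega

omit [DecidableEq X] in
theorem card_seg (k : ℕ) : #(L.seg k) = min k n := by
  have : (L.seg k).image L.p = Finset.Icc 1 (min k n) := by
    ext i
    simp only [mem_image, mem_seg, mem_Icc]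
    constructor
    · rintro ⟨x, hx, rfl⟩
      have := L.p_le x
      omega
    · rintro ⟨h1, h2⟩
      obtain ⟨x, rfl⟩ := L.p_surj i h1 (by omega)
      exact ⟨x, by omega, rfl⟩
  rw [← card_image_of_injOn (f := L.p), this, Nat.card_Icc, Nat.add_sub_cancel]
  intro x hx y hy h
  exact L.p_inj x y (L.mem_seg.1 hx).1 h

omit [DecidableEq X] in
theorem good_star {S : Finset X} (hS : S ⊆ L.seg n) : GoodPairing S L.star := by
  constructor
  · intro x hx y hy h
    exact L.star_inj x y (L.mem_seg.1 (hS hx)).1 (L.mem_seg.1 (hS hy)).1 h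
  · intro x hx h
    have h1 := (L.mem_seg.1 (hS hx)).1
    have h2 := (L.mem_seg.1 (hS h)).1
    have := L.p_star x
    omega

omit [DecidableEq X] in
theorem star_notMem {x : X} (hx : x ∈ L.seg n) {T : Finset X} (hT : T ⊆ L.seg n) :
    L.star x ∉ T := by
  intro h
  have h1 := (L.mem_seg.1 hx).1
  have h2 := (L.mem_seg.1 (hT h)).1
  have := L.p_star x
  omega

/-- Some initial segment `{1, …, 2 * i + 1}` with `i < m` contains more than `i` elements of `C`, that
is, elements of `C` are in the majority there. -/
def Dense (m : ℕ) (C : Finset X) : Prop := ∃ i < m, i < #(C ∩ L.seg (2 * i + 1))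

/-- A set of `m` elements that is not dense can be matched with `m` smaller elements of its
complement. The greatest element `c` of `C` is at least `2 * m`, so after matching the other
elements by induction there is still a free smaller element for `c`. -/
theorem exists_matching (m : ℕ) (C : Finset X) (hC : C ⊆ L.seg n) (hm : #C = m)
    (hd : ¬ L.Dense m C) : ∃ (S : Finset X) (f : X → X), #S = m ∧ Set.InjOn f S ∧
      ∀ x ∈ S, x ∉ C ∧ f x ∈ C ∧ 1 ≤ L.p x ∧ L.p x < L.p (f x) := by
  induction m generalizing C with
  | zero => exact ⟨∅, id, by simp⟩
  | succ m ih =>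
    obtain ⟨c, hc, hmax⟩ := C.exists_max_image L.p (card_pos.1 (by omega))
    obtain ⟨S, f, hS, hf, hSf⟩ := ih (C.erase c) ((erase_subset _ _).trans hC)
      (by rw [card_erase_of_mem hc]; omega) (by
        rintro ⟨i, hi, h⟩
        exact hd ⟨i, by omega, h.trans_le (card_le_card (by gcongr; exact erase_subset _ _))⟩)
    have hpc : 2 * m + 2 ≤ L.p c := by
      by_contra hlt
      apply hd
      refine ⟨m, by omega, ?_⟩
      have : C ∩ L.seg (2 * m + 1) = C := by
        rw [inter_eq_left]
        intro x hx
        have h1 := hmax x hx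
        have h2 := L.mem_seg.1 (hC hx)
        rw [mem_seg]
        omega
      rw [this]
      omega
    have hpn := L.p_le c
    obtain ⟨x, hx, hx'⟩ : ∃ x ∈ L.seg (L.p c - 1), x ∉ C.erase c ∪ S := by
      apply exists_mem_notMem_of_card_lt_card
      have h1 := card_union_le (C.erase c) S
      rw [card_erase_of_mem hc] at h1
      rw [card_seg]
      omega
    rw [mem_seg] at hx
    simp only [mem_union, not_or, mem_erase, not_and] at hx'
    have hxc : x ≠ c := by
      rintro rfl
      omega
    have hxS : ∀ y ∈ S, y ≠ x := by
      rintro y hy rfl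
      exact hx'.2 hy
    refine ⟨insert x S, Function.update f x c, ?_, ?_, ?_⟩
    · rw [card_insert_of_notMem hx'.2, hS]
    · rw [coe_insert, Set.injOn_insert (by exact_mod_cast hx'.2)]
      constructor
      · intro y hy z hz h
        rw [Function.update_of_ne (hxS y hy), Function.update_of_ne (hxS z hz)] at h
        exact hf hy hz h
      · rintro ⟨y, hy, h⟩
        rw [Function.update_self, Function.update_of_ne (hxS y hy)] at h
        have := (hSf y hy).2.1
        simp [h] at this
    · intro y hy
      rw [mem_insert] at hy
      rcases hy with rfl | hy
      · rw [Function.update_self]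
        exact ⟨hx'.1 hxc, hc, by omega, by omega⟩
      · rw [Function.update_of_ne (hxS y hy)]
        obtain ⟨h1, h2, h3, h4⟩ := hSf y hy
        have h5 := hmax _ (mem_of_mem_erase h2)
        refine ⟨fun h => h1 (mem_erase.2 ⟨?_, h⟩), mem_of_mem_erase h2, h3, h4⟩
        rintro rfl
        omega

/-- If `C` avoided `{1, …, a}`, it would have at most `2 * i + 1 - a ≤ i` elements in
`{1, …, 2 * i + 1}` when `i < m ≤ a`. -/
theorem Dense.inter_nonempty {a m : ℕ} {C : Finset X} (h : L.Dense m C) (ham : m ≤ a) :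
    (C ∩ L.seg a).Nonempty := by
  obtain ⟨i, hi, h⟩ := h
  by_contra hne
  rw [not_nonempty_iff_eq_empty] at hne
  have h1 : C ∩ L.seg (2 * i + 1) ⊆ L.seg (2 * i + 1) \ L.seg (min a (2 * i + 1)) := by
    intro x hx
    rw [mem_inter] at hx
    rw [mem_sdiff]
    refine ⟨hx.2, fun h' => ?_⟩
    have : x ∈ C ∩ L.seg a := mem_inter.2 ⟨hx.1, L.seg_mono (by omega) h'⟩
    simp [hne] at this
  have h2 := card_le_card h1
  rw [card_sdiff_of_subset (L.seg_mono (by omega)), card_seg, card_seg] at h2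
  omega

end Labelling

/-! ### Straightening and descent -/

namespace PermSystem

open Equiv Finset

variable {X M : Type} [DecidableEq X] [AddCommGroup M] (P : PermSystem X M)
variable [Fintype X] {n : ℕ} (L : Labelling X n)

/-- The sum of the subgroups `V_{[n] - C}` over all dense `C ⊆ [n]`. -/
def denseSum (m : ℕ) : AddSubgroup M :=
  ⨆ C ∈ {C : Finset X | C ⊆ L.seg n ∧ L.Dense m C}, P.F (L.seg n \ C)

/-- The sum `V_{[n] - {1}} + ⋯ + V_{[n] - {a}}`. -/
def eraseSum (a : ℕ) : AddSubgroup M := ⨆ x ∈ L.seg a, P.F ((L.seg n).erase x)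

variable {P L}

theorem le_denseSum {m : ℕ} {C : Finset X} (hC : C ⊆ L.seg n) (hd : L.Dense m C) :
    P.F (L.seg n \ C) ≤ P.denseSum L m :=
  le_iSup₂_of_le (f := fun C (_ : C ∈ {C : Finset X | C ⊆ L.seg n ∧ L.Dense m C}) =>
    P.F (L.seg n \ C)) C ⟨hC, hd⟩ le_rfl

theorem le_eraseSum {a : ℕ} {C : Finset X} (hC : (C ∩ L.seg a).Nonempty) :
    P.F (L.seg n \ C) ≤ P.eraseSum L a := by
  obtain ⟨x, hx⟩ := hC
  rw [mem_inter] at hx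
  refine le_iSup₂_of_le x hx.2 (P.mono ?_)
  intro y
  simp only [mem_sdiff, mem_erase]
  rintro ⟨h1, h2⟩
  exact ⟨fun h => h2 (h ▸ hx.1), h1⟩

omit [Fintype X] in
theorem image_eq_of_fix {σ : Perm X} {A U : Finset X} (hA : A ⊆ U)
    (h : ∀ y, y ∉ A → σ y = y) : U.image σ = U := by
  apply eq_of_subset_of_card_le
  · intro z hz
    obtain ⟨y, hy, rfl⟩ := mem_image.1 hz
    by_contra hσ
    have h1 : σ (σ y) = σ y := h _ (fun h' => hσ (hA h'))
    rw [σ.injective h1] at hσ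
    exact hσ hy
  · rw [card_image_of_injective _ σ.injective]

omit [Fintype X] in
theorem image_fix_of_pairing {σ : Perm X} {S U : Finset X} {f : X → X} (hS : S ⊆ U)
    (hf : ∀ x ∈ S, f x ∈ U) (h : ∀ y, y ∉ S → (∀ x ∈ S, y ≠ f x) → σ y = y) :
    U.image σ = U := by
  apply image_eq_of_fix (A := S ∪ S.image f)
  · intro x hx
    rw [mem_union, mem_image] at hx
    rcases hx with hx | ⟨y, hy, rfl⟩
    · exact hS hx
    · exact hf y hy
  · intro y hy
    simp only [mem_union, mem_image, not_or, not_exists, not_and] at hy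
    exact h y hy.1 (fun x hx he => hy.2 x hx he.symm)

/-- If all products of `K + 1` disjoint factors vanish, then `V_{[n] - C}` with `#C = K + 1` lies in
`P.denseSum L (K + 1)`. The induction is on the potential `s = ∑ c ∈ C, p c`: a set `C` that is not
dense is matched with smaller elements, and the vanishing product straightens `v`. -/
theorem mem_denseSum_of_ann {K : ℕ}
    (hann : ∀ (S : Finset X) (f : X → X), #S = K + 1 → GoodPairing S f → P.J S f = 0)
    (s : ℕ) (C : Finset X) (hs : ∑ c ∈ C, L.p c = s) (hC : C ⊆ L.seg n) (hcard : #C = K + 1) (v : M)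
    (hv : v ∈ P.F (L.seg n \ C)) : v ∈ P.denseSum L (K + 1) := by
  induction s using Nat.strong_induction_on generalizing C v with
  | _ s ih =>
    by_cases hd : L.Dense (K + 1) C
    · exact le_denseSum hC hd hv
    obtain ⟨S, f, hS, hf, hSf⟩ := L.exists_matching (K + 1) C hC hcard hd
    have hgood : GoodPairing S f := ⟨hf, fun x hx h => (hSf _ h).1 (hSf x hx).2.1⟩
    have hST : S ⊆ L.seg n := fun x hx => L.mem_seg.2 ⟨(hSf x hx).2.2.1, L.p_le x⟩
    refine P.straighten L.p hgood (fun x hx => ⟨(hSf x hx).1, (hSf x hx).2.1, (hSf x hx).2.2.2⟩)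
      (by rw [hann S f hS hgood]; rfl) _ ?_
    intro σ hσ hlt
    have hT0 : (L.seg n).image σ = L.seg n :=
      image_fix_of_pairing hST (fun x hx => hC (hSf x hx).2.1) hσ
    refine ih _ (hs ▸ hlt) (C.image σ) rfl ?_ ?_ _ ?_
    · rw [← hT0]
      exact image_subset_image hC
    · rw [card_image_of_injective _ σ.injective, hcard]
    · have := P.equi σ hv
      rwa [image_sdiff _ _ σ.injective, hT0] at this

/-- Let `C ⊆ {1, …, 2 * m + 1}` have `m + 1` elements. If the product of the factors pairing the `m`
elements of `{1, …, 2 * m + 1} \ C` with points outside `[n] \ C` kills `v ∈ V_{[n] - C}`, then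
`v ∈ P.denseSum L m`. If `C` is not dense, removing its greatest element and matching the rest uses
up exactly `{1, …, 2 * m + 1} \ C`; the hypothesis is transferred to these partners and straightens
`v`. It passes to the translates with the conjugated partners, so `f` varies in the induction. -/
theorem mem_denseSum_of_killed {m : ℕ} (hm : 2 * m + 1 ≤ n)
    (s : ℕ) (C : Finset X) (hs : ∑ c ∈ C, L.p c = s) (hC : C ⊆ L.seg (2 * m + 1))
    (hcard : #C = m + 1) (v : M) (hv : v ∈ P.F (L.seg n \ C)) (f : X → X)
    (hf : Set.InjOn f ↑(L.seg (2 * m + 1) \ C))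
    (hfT : ∀ x ∈ L.seg (2 * m + 1) \ C, f x ∉ L.seg n \ C)
    (h0 : P.J (L.seg (2 * m + 1) \ C) f v = 0) : v ∈ P.denseSum L m := by
  induction s using Nat.strong_induction_on generalizing C v f with
  | _ s ih =>
    have hseg := L.seg_mono hm
    by_cases hd : L.Dense m C
    · exact le_denseSum (hC.trans hseg) hd hv
    obtain ⟨c, hc, hmax⟩ := C.exists_max_image L.p (card_pos.1 (by omega))
    obtain ⟨S, g, hS, hg, hSg⟩ := L.exists_matching m (C.erase c)
      ((erase_subset _ _).trans (hC.trans hseg)) (by rw [card_erase_of_mem hc]; omega) (by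
        rintro ⟨i, hi, h⟩
        exact hd ⟨i, by omega, h.trans_le (card_le_card (by gcongr; exact erase_subset _ _))⟩)
    have hgC : ∀ x ∈ S, g x ∈ C := fun x hx => mem_of_mem_erase (hSg x hx).2.1
    have hSC : ∀ x ∈ S, x ∉ C := by
      intro x hx h
      obtain ⟨h1, h2, h3, h4⟩ := hSg x hx
      apply h1
      rw [mem_erase]
      refine ⟨?_, h⟩
      rintro rfl
      have := hmax _ (hgC x hx)
      omega
    have hSsub : S ⊆ L.seg (2 * m + 1) := by
      intro x hx
      have h1 := (L.mem_seg.1 (hC (hgC x hx))).2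
      obtain ⟨-, -, h3, h4⟩ := hSg x hx
      rw [L.mem_seg]
      omega
    have hSeq : S = L.seg (2 * m + 1) \ C := by
      apply eq_of_subset_of_card_le
      · intro x hx
        exact mem_sdiff.2 ⟨hSsub hx, hSC x hx⟩
      · rw [card_sdiff_of_subset hC, L.card_seg]
        omega
    rw [← hSeq] at hf hfT h0
    have hST : S ⊆ L.seg n \ C := fun x hx => mem_sdiff.2 ⟨hseg (hSsub hx), hSC x hx⟩
    have hgT : ∀ x ∈ S, g x ∉ L.seg n \ C := fun x hx h => (mem_sdiff.1 h).2 (hgC x hx)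
    have h0' := P.J_transfer hv hST hf hg hfT hgT h0
    have hgood : GoodPairing S g := ⟨hg, fun x hx h => hSC _ h (hgC x hx)⟩
    refine P.straighten L.p hgood (fun x hx => ⟨hSC x hx, hgC x hx, (hSg x hx).2.2.2⟩) h0' _ ?_
    intro σ hσ hlt
    have hT0 : (L.seg n).image σ = L.seg n :=
      image_fix_of_pairing (hSsub.trans hseg) (fun x hx => hseg (hC (hgC x hx))) hσ
    have hTm : (L.seg (2 * m + 1)).image σ = L.seg (2 * m + 1) :=
      image_fix_of_pairing hSsub (fun x hx => hC (hgC x hx)) hσ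
    have hS' : L.seg (2 * m + 1) \ C.image σ = S.image σ := by
      rw [hSeq, image_sdiff _ _ σ.injective, hTm]
    have hT' : L.seg n \ C.image σ = (L.seg n \ C).image σ := by
      rw [image_sdiff _ _ σ.injective, hT0]
    refine ih _ (hs ▸ hlt) (C.image σ) rfl ?_ ?_ _ ?_ (fun y => σ (f (σ.symm y))) ?_ ?_ ?_
    · rw [← hTm]
      exact image_subset_image hC
    · rw [card_image_of_injective _ σ.injective, hcard]
    · rw [hT']
      exact P.equi σ hv
    · rw [hS', coe_image]
      rintro _ ⟨x, hx, rfl⟩ _ ⟨y, hy, rfl⟩ h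
      simp only [Equiv.symm_apply_apply] at h
      rw [hf hx hy (σ.injective h)]
    · rw [hS', hT']
      intro x' hx' h
      obtain ⟨x, hx, rfl⟩ := mem_image.1 hx'
      obtain ⟨y, hy, h⟩ := mem_image.1 h
      simp only [Equiv.symm_apply_apply] at h
      exact hfT x hx (σ.injective h ▸ hy)
    · rw [hS', ← P.ρ_J ⟨hf, fun x hx h => hfT x hx (hST h)⟩ σ _ (by simp), h0, map_zero]

theorem exists_sum_of_mem_iSup {ι : Type} [DecidableEq ι] (s : Finset ι) (G : ι → AddSubgroup M)
    {v : M} (hv : v ∈ ⨆ i ∈ s, G i) : ∃ w : ι → M, (∀ i ∈ s, w i ∈ G i) ∧ v = ∑ i ∈ s, w i := by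
  induction s using Finset.induction generalizing v with
  | empty => exact ⟨fun _ => 0, by simpa using hv⟩
  | insert a s ha ih =>
    rw [Finset.iSup_insert, AddSubgroup.mem_sup] at hv
    obtain ⟨x, hx, y, hy, rfl⟩ := hv
    obtain ⟨w, hw, rfl⟩ := ih hy
    have hne : ∀ i ∈ s, i ≠ a := by
      rintro i hi rfl
      exact ha hi
    refine ⟨Function.update w a x, ?_, ?_⟩
    · intro i hi
      rcases Finset.mem_insert.1 hi with rfl | hi
      · simpa using hx
      · rw [Function.update_of_ne (hne i hi)]
        exact hw i hi
    · rw [Finset.sum_insert ha, Function.update_self]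
      congr 1
      exact Finset.sum_congr rfl fun i hi => by rw [Function.update_of_ne (hne i hi)]

/-- Passing from level `m` to level `m + 1` only adds the sets with `m + 1` elements inside
`{1, …, 2 * m + 1}`, up to shrinking `C`. -/
theorem denseSum_succ_le (m : ℕ) : P.denseSum L (m + 1) ≤ P.denseSum L m ⊔
    ⨆ C ∈ powersetCard (m + 1) (L.seg (2 * m + 1)), P.F (L.seg n \ C) := by
  refine iSup₂_le ?_
  rintro C ⟨hC, i, hi, h⟩
  rcases Nat.lt_succ_iff_lt_or_eq.1 hi with hi | rfl
  · exact le_sup_of_le_left (le_denseSum hC ⟨i, hi, h⟩)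
  · obtain ⟨D, hD, hDc⟩ := exists_subset_card_eq (Nat.succ_le_of_lt h)
    refine le_sup_of_le_right (le_iSup₂_of_le D ?_ (P.mono ?_))
    · rw [mem_powersetCard]
      exact ⟨hD.trans inter_subset_right, hDc⟩
    · exact sdiff_subset_sdiff le_rfl (hD.trans inter_subset_left)

/-- Each `V_{[n] - {x}}` with `x ≤ a` is killed by the factor pairing `x` with its star. -/
theorem eraseSum_le_Jker {a : ℕ} {S : Finset X} (hS : S ⊆ L.seg n) (haS : L.seg a ⊆ S) :
    P.eraseSum L a ≤ P.Jker S L.star := by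
  refine iSup₂_le fun x hx => ?_
  exact P.J_kill (L.good_star hS) (haS hx) (notMem_erase x _)
    (L.star_notMem (hS (haS hx)) (erase_subset _ _))

/-- The descent step. Write `v` as a sum over `P.denseSum L m`, `P.eraseSum L a` and the sets `D` with
`m + 1` elements inside `{1, …, 2 * m + 1}`. For such a set `C` that is not dense and misses
`{1, …, a}`, the product over `{1, …, 2 * m + 1} \ C ⊇ {1, …, a}` kills `v` and every
summand other than that of `C`. So it kills that summand as well, and `mem_denseSum_of_killed`
applies to it. -/
theorem descent {a m : ℕ} (ham : a ≤ m) (hm : 2 * m + 1 ≤ n) {v : M}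
    (h0 : P.J (L.seg a) L.star v = 0)
    (hv : v ∈ P.denseSum L (m + 1) ⊔ P.eraseSum L a) :
    v ∈ P.denseSum L m ⊔ P.eraseSum L a := by
  have hseg := L.seg_mono hm
  obtain ⟨w, hw, u, hu, rfl⟩ := AddSubgroup.mem_sup.1 hv
  obtain ⟨w, hw', z, hz, rfl⟩ := AddSubgroup.mem_sup.1 (denseSum_succ_le m hw)
  obtain ⟨z, hz', rfl⟩ := exists_sum_of_mem_iSup _ _ hz
  refine add_mem (add_mem (AddSubgroup.mem_sup_left hw') (sum_mem fun C hC => ?_))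
    (AddSubgroup.mem_sup_right hu)
  have hzC := hz' C hC
  rw [mem_powersetCard] at hC
  by_cases hd : L.Dense m C
  · exact AddSubgroup.mem_sup_left (le_denseSum (hC.1.trans hseg) hd hzC)
  by_cases hne : (C ∩ L.seg a).Nonempty
  · exact AddSubgroup.mem_sup_right (le_eraseSum hne hzC)
  rw [not_nonempty_iff_eq_empty] at hne
  apply AddSubgroup.mem_sup_left
  set S := L.seg (2 * m + 1) \ C with hSdef
  have hSn : S ⊆ L.seg n := sdiff_subset.trans hseg
  have hgood := L.good_star hSn
  have haS : L.seg a ⊆ S := by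
    intro x hx
    refine mem_sdiff.2 ⟨L.seg_mono (by omega) hx, fun h => ?_⟩
    have : x ∈ C ∩ L.seg a := mem_inter.2 ⟨h, hx⟩
    simp [hne] at this
  have hkill : ∀ D : Finset X, D ⊆ L.seg n → (D ∩ S).Nonempty →
      P.F (L.seg n \ D) ≤ P.Jker S L.star := by
    rintro D hD ⟨x, hx⟩
    rw [mem_inter] at hx
    exact P.J_kill hgood hx.2 (fun h => (mem_sdiff.1 h).2 hx.1)
      (L.star_notMem (hD hx.1) sdiff_subset)
  have hwk : w ∈ P.Jker S L.star := by
    refine (iSup₂_le ?_ : P.denseSum L m ≤ _) hw'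
    rintro D ⟨hD, i, hi, h⟩
    refine hkill D hD ?_
    by_contra hDS
    rw [not_nonempty_iff_eq_empty] at hDS
    refine hd ⟨i, hi, h.trans_le (card_le_card ?_)⟩
    intro x hx
    rw [mem_inter] at hx ⊢
    refine ⟨?_, hx.2⟩
    by_contra hxC
    have : x ∈ D ∩ S := mem_inter.2 ⟨hx.1, mem_sdiff.2 ⟨L.seg_mono (by omega) hx.2, hxC⟩⟩
    simp [hDS] at this
  have huk : u ∈ P.Jker S L.star := eraseSum_le_Jker hSn haS hu
  have hvk := P.J_ker_mono hgood haS (P.mem_Jker.2 h0)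
  have hzk : z C ∈ P.Jker S L.star := by
    have hC' : C ∈ powersetCard (m + 1) (L.seg (2 * m + 1)) := mem_powersetCard.2 hC
    have hrest : ∑ D ∈ (powersetCard (m + 1) (L.seg (2 * m + 1))).erase C, z D
        ∈ P.Jker S L.star := by
      refine sum_mem fun D hD => ?_
      obtain ⟨hne', hD⟩ := mem_erase.1 hD
      have hzD := hz' D hD
      rw [mem_powersetCard] at hD
      refine hkill D (hD.1.trans hseg) ?_ hzD
      by_contra hDS
      rw [not_nonempty_iff_eq_empty] at hDS
      apply hne'
      apply eq_of_subset_of_card_le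
      · intro x hx
        by_contra hxC
        have : x ∈ D ∩ S := mem_inter.2 ⟨hx, mem_sdiff.2 ⟨hD.1 hx, hxC⟩⟩
        simp [hDS] at this
      · rw [hC.2, hD.2]
    rw [← Finset.add_sum_erase _ _ hC'] at hvk
    have h1 := (add_mem_cancel_right huk).1 hvk
    have h2 := (add_mem_cancel_left hwk).1 h1
    exact (add_mem_cancel_right hrest).1 h2
  exact mem_denseSum_of_killed hm _ C rfl hC.1 hC.2 _ hzC L.star hgood.1
    (fun x hx => L.star_notMem (hSn hx) sdiff_subset) hzk

/-- The inclusion of the kernel in the sum, in the case `K ≤ d`, which ensures `2 * m + 1 ≤ n` for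
all `m ≤ K`, as the descent requires. -/
theorem mem_eraseSum_of_le {K d a : ℕ} (hKd : K ≤ d) (hn : K + d < n)
    (hgen : ∀ T : Finset X, P.F T ≤ ⨆ S ∈ {S : Finset X | S ⊆ T ∧ #S ≤ d}, P.F S)
    (hann : ∀ (S : Finset X) (f : X → X), #S = K + 1 → GoodPairing S f → P.J S f = 0)
    {v : M} (hv : v ∈ P.F (L.seg n)) (h0 : P.J (L.seg a) L.star v = 0) :
    v ∈ P.eraseSum L a := by
  have hstart : v ∈ P.denseSum L (K + 1) := by
    refine (iSup₂_le ?_ : _ ≤ P.denseSum L (K + 1)) (hgen _ hv)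
    rintro S ⟨hS, hSd⟩ w hw
    have hcard : K + 1 ≤ #(L.seg n \ S) := by
      rw [card_sdiff_of_subset hS, L.card_seg]
      omega
    obtain ⟨C, hC, hCc⟩ := exists_subset_card_eq hcard
    refine mem_denseSum_of_ann hann _ C rfl (hC.trans sdiff_subset) hCc w (P.mono ?_ hw)
    intro x hx
    exact mem_sdiff.2 ⟨hS hx, fun h => (mem_sdiff.1 (hC h)).2 hx⟩
  have hend : ∀ m, m ≤ a → P.denseSum L m ≤ P.eraseSum L a := by
    intro m hm
    refine iSup₂_le ?_
    rintro C ⟨_, hd⟩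
    exact le_eraseSum (hd.inter_nonempty L hm)
  have hall : ∀ m, m ≤ K + 1 → v ∈ P.denseSum L m ⊔ P.eraseSum L a → v ∈ P.eraseSum L a := by
    intro m
    induction m with
    | zero => exact fun _ h => (sup_le (hend 0 (Nat.zero_le _)) le_rfl) h
    | succ m ih =>
      intro hmK h
      by_cases ham : a ≤ m
      · exact ih (by omega) (descent ham (by omega) h0 h)
      · exact (sup_le (hend (m + 1) (by omega)) le_rfl) h
  exact hall (K + 1) le_rfl (AddSubgroup.mem_sup_left hstart)

/-- Generation in degree `≤ d` alone forces products of `d + 1` disjoint factors to vanish: a set `T`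
with at most `d` elements misses one of `d + 1` disjoint pairs. -/
theorem J_eq_zero_of_gen {d : ℕ} (hF : P.F Finset.univ = ⊤)
    (hgen : ∀ T : Finset X, P.F T ≤ ⨆ S ∈ {S : Finset X | S ⊆ T ∧ #S ≤ d}, P.F S)
    (S : Finset X) (f : X → X) (hS : #S = d + 1) (hf : GoodPairing S f) : P.J S f = 0 := by
  have hker : P.F Finset.univ ≤ P.Jker S f := by
    refine (hgen _).trans (iSup₂_le ?_)
    rintro T ⟨-, hT⟩
    obtain ⟨x, hx, hxT, hfT⟩ : ∃ x ∈ S, x ∉ T ∧ f x ∉ T := by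
      by_contra! hcon
      have := card_le_card_of_injOn (s := S) (t := T) (fun x => if x ∈ T then x else f x)
        (by
          intro x hx
          have := hcon x hx
          dsimp only
          split_ifs with h
          · exact h
          · exact this h)
        (by
          intro x hx y hy h
          have h1 := hf.2 x hx
          have h2 := hf.2 y hy
          dsimp only at h
          split_ifs at h with h3 h4
          · exact h
          · exact absurd (h ▸ hx) h2
          · exact absurd (h ▸ hy) h1
          · exact hf.1 hx hy h)
      omega
    exact P.J_kill hf hx hxT hfT
  ext v
  exact P.mem_Jker.1 (hker (by rw [hF]; trivial))

/-- The theorem for permutation systems. -/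
theorem mem_eraseSum_iff {K d a : ℕ} (hn : K + d < n) (ha : a ≤ n) (hF : P.F Finset.univ = ⊤)
    (hgen : ∀ T : Finset X, P.F T ≤ ⨆ S ∈ {S : Finset X | S ⊆ T ∧ #S ≤ d}, P.F S)
    (hann : ∀ (S : Finset X) (f : X → X), #S = K + 1 → GoodPairing S f → P.J S f = 0)
    {v : M} (hv : v ∈ P.F (L.seg n)) :
    v ∈ P.eraseSum L a ↔ P.J (L.seg a) L.star v = 0 := by
  constructor
  · intro h
    exact eraseSum_le_Jker (L.seg_mono ha) le_rfl h
  · intro h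
    rcases le_total K d with hKd | hKd
    · exact mem_eraseSum_of_le hKd hn hgen hann hv h
    -- when `d ≤ K`, the parameter `K` may be lowered to `d`
    · exact mem_eraseSum_of_le le_rfl (by omega) hgen (J_eq_zero_of_gen hF hgen) hv h

end PermSystem

/-! ### FI-modules as permutation systems -/

namespace FIModule

open Finset

variable (V : FIModule)

theorem map_map {S T U : Finset ℤ} (f : ↥S ↪ ↥T) (g : ↥T ↪ ↥U) (v : V.obj S) :
    V.map g (V.map f v) = V.map (f.trans g) v := by
  rw [V.map_comp]; rfl

theorem map_val_subset {Ω : Finset ℤ} (T : Finset ↥Ω) :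
    T.map (Function.Embedding.subtype _) ⊆ Ω := by
  intro x hx
  obtain ⟨y, -, rfl⟩ := Finset.mem_map.1 hx
  exact y.2

/-- The image of `V_T` in `V_Ω`, for a subset `T` of `Ω` given as a finset of the subtype. -/
def piece (Ω : Finset ℤ) (T : Finset ↥Ω) : AddSubgroup (V.obj Ω) :=
  (V.map (inclEmb (map_val_subset T))).range

/-- The subgroup `V_T` of `V_Ω` consists of the elements coming from any injection into `Ω` whose
image lies in `T`. -/
theorem mem_piece {Ω : Finset ℤ} {T : Finset ↥Ω} {v : V.obj Ω} : v ∈ V.piece Ω T ↔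
    ∃ (S : Finset ℤ) (f : ↥S ↪ ↥Ω) (w : V.obj S), (∀ s, f s ∈ T) ∧ V.map f w = v := by
  constructor
  · rintro ⟨w, rfl⟩
    refine ⟨_, _, w, ?_, rfl⟩
    rintro ⟨s, hs⟩
    obtain ⟨y, hy, rfl⟩ := Finset.mem_map.1 hs
    exact hy
  · rintro ⟨S, f, w, hf, rfl⟩
    let g : ↥S ↪ ↥(T.map (Function.Embedding.subtype (· ∈ Ω))) :=
      ⟨fun s => ⟨(f s).1, Finset.mem_map.2 ⟨f s, hf s, rfl⟩⟩, fun a b h =>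
        f.injective (Subtype.ext (Subtype.mk.inj h))⟩
    refine ⟨V.map g w, ?_⟩
    rw [map_map]
    rfl

/-- The permutation system formed by `V_Ω` and the images of `V_T` for `T ⊆ Ω`. -/
def permSystem (Ω : Finset ℤ) : PermSystem ↥Ω (V.obj Ω) where
  ρ :=
    { toFun := fun σ => V.map σ.toEmbedding
      map_one' := V.map_id Ω
      map_mul' := fun σ τ => V.map_comp τ.toEmbedding σ.toEmbedding }
  F := V.piece Ω
  mono := by
    intro S T h v hv
    rw [mem_piece] at hv ⊢
    obtain ⟨U, f, w, hf, rfl⟩ := hv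
    exact ⟨U, f, w, fun s => h (hf s), rfl⟩
  equi := by
    intro σ T v hv
    rw [mem_piece] at hv ⊢
    obtain ⟨U, f, w, hf, rfl⟩ := hv
    exact ⟨U, f.trans σ.toEmbedding, w, fun s => mem_image_of_mem _ (hf s), (V.map_map _ _ _).symm⟩
  fix := by
    intro σ T v hv hσ
    rw [mem_piece] at hv
    obtain ⟨U, f, w, hf, rfl⟩ := hv
    change V.map σ.toEmbedding (V.map f w) = V.map f w
    rw [map_map]
    congr 2
    ext s
    exact congrArg _ (hσ _ (hf s))

theorem JOp_eq (Ω : Finset ℤ) (i j : ↥Ω) : V.JOp Ω i j = (V.permSystem Ω).J1 i j := rfl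

theorem map_JOp {S T : Finset ℤ} (f : ↥S ↪ ↥T) (i j : ↥S) (v : V.obj S) :
    V.map f (V.JOp S i j v) = V.JOp T (f i) (f j) (V.map f v) := by
  change V.map f (v - V.map _ v) = V.map f v - V.map _ (V.map f v)
  rw [map_sub, map_map, map_map]
  congr 3
  ext s
  simp [(f.injective.swap_apply i j s)]

theorem map_compList {S T : Finset ℤ} (f : ↥S ↪ ↥T) {m : ℕ} (ii jj : Fin m → ↥S) (v : V.obj S) :
    V.map f (compList (List.ofFn fun s => V.JOp S (ii s) (jj s)) v) =
      (List.ofFn fun s => (V.permSystem T).J1 (f (ii s)) (f (jj s))).prod (V.map f v) := by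
  induction m with
  | zero => rfl
  | succ m ih =>
    rw [List.ofFn_succ, List.ofFn_succ, List.prod_cons, PermSystem.end_mul_apply, ← ih]
    exact V.map_JOp f _ _ _

/-- The hypothesis on the ideal concerns the sets `[N]`; it is transported to an arbitrary finite set
`Ω` along a bijection. -/
theorem permSystem_ann {Ω : Finset ℤ} {m : ℕ} (hann : V.AnnIdeal m)
    (S : Finset ↥Ω) (f : ↥Ω → ↥Ω) (hS : #S = m) (hf : GoodPairing S f) :
    (V.permSystem Ω).J S f = 0 := by
  let e : ↥Ω ≃ ↥(Finset.Icc (1 : ℤ) (#Ω : ℤ)) := Fintype.equivOfCardEq (by simp)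
  let ii : Fin m → ↥Ω := fun s => S.toList.get (s.cast (by simp [hS]))
  have hii : ∀ s, ii s ∈ S := fun s => Finset.mem_toList.1 (List.get_mem _ _)
  have hinj : Function.Injective ii := by
    intro s t h
    have := (List.nodup_iff_injective_get.1 S.nodup_toList) h
    simpa using this
  have hlist : S.toList = List.ofFn ii := by
    apply List.ext_get
    · simp [hS]
    · intro k h1 h2
      simp [ii]
  ext v
  have h := congrArg (fun φ => φ (V.map e.toEmbedding v))
    (hann (#Ω) (fun s => e (ii s)) (fun s => e (f (ii s))) (by
      refine Function.Injective.sumElim (e.injective.comp hinj) ?_ ?_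
      · intro s t h
        exact hinj (hf.1 (hii s) (hii t) (e.injective h))
      · intro s t h
        exact hf.2 _ (hii t) (e.injective h ▸ hii s)))
  have h2 := V.map_compList e.symm.toEmbedding (fun s => e (ii s)) (fun s => e (f (ii s)))
    (V.map e.toEmbedding v)
  rw [show compList _ (V.map e.toEmbedding v) = 0 from h, map_zero, map_map] at h2
  have h3 : e.toEmbedding.trans e.symm.toEmbedding = Function.Embedding.refl _ := by
    ext x; simp
  rw [h3, V.map_id] at h2
  rw [PermSystem.J, hlist, List.map_ofFn]
  simpa [Function.comp_def] using h2.symm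

theorem permSystem_gen {Ω : Finset ℤ} {d : ℕ} (hgen : V.GenLE d) (T : Finset ↥Ω) :
    (V.permSystem Ω).F T ≤ ⨆ S ∈ {S : Finset ↥Ω | S ⊆ T ∧ #S ≤ d}, (V.permSystem Ω).F S := by
  intro v hv
  obtain ⟨U, f, w, hf, rfl⟩ := V.mem_piece.1 hv
  have hle : AddSubgroup.closure {y : V.obj U |
      ∃ (S : Finset ℤ) (f : ↥S ↪ ↥U) (v : V.obj S), S.card ≤ d ∧ y = V.map f v} ≤
      (⨆ S ∈ {S : Finset ↥Ω | S ⊆ T ∧ #S ≤ d}, (V.permSystem Ω).F S).comap (V.map f) := by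
    rw [AddSubgroup.closure_le]
    rintro _ ⟨S, g, u, hS, rfl⟩
    rw [AddSubgroup.coe_comap, Set.mem_preimage, map_map, SetLike.mem_coe]
    refine AddSubgroup.mem_iSup_of_mem (Finset.univ.map (g.trans f))
      (AddSubgroup.mem_iSup_of_mem ?_ ?_)
    · constructor
      · intro x hx
        obtain ⟨s, -, rfl⟩ := Finset.mem_map.1 hx
        exact hf _
      · simpa using hS
    · exact V.mem_piece.2 ⟨S, g.trans f, u, fun s => Finset.mem_map.2 ⟨s, mem_univ _, rfl⟩, rfl⟩
  exact hle (hgen U w)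

/-- The ambient set `{-n, …, n}`: the copy of `[n]` is `{1, …, n}`, and the star of `x` is `-x`. -/
def labelling (n : ℕ) : Labelling ↥(Finset.Icc (-(n : ℤ)) n) n where
  p x := x.1.toNat
  star x := ⟨-x.1, by have := Finset.mem_Icc.1 x.2; rw [Finset.mem_Icc]; omega⟩
  p_le x := by have := Finset.mem_Icc.1 x.2; omega
  p_inj x y h1 h2 := Subtype.ext (by omega)
  p_surj k h1 h2 := ⟨⟨k, by rw [Finset.mem_Icc]; omega⟩, by simp⟩
  p_star x := by dsimp only; omega
  star_inj x y h1 h2 h := Subtype.ext (by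
    have := congrArg Subtype.val h
    dsimp only at this
    omega)

theorem mem_labelling_seg {n k : ℕ} {x : ↥(Finset.Icc (-(n : ℤ)) n)} :
    x ∈ (labelling n).seg k ↔ 1 ≤ x.1 ∧ x.1 ≤ k := by
  rw [Labelling.mem_seg]
  change 1 ≤ x.1.toNat ∧ x.1.toNat ≤ k ↔ _
  omega

/-- The subgroup `V_S` of `V_T`, mapped on into `V_Ω`, is the image of `V_S` in `V_Ω`. -/
theorem range_comp_eq_piece {S T Ω : Finset ℤ} (hST : S ⊆ T) (hTΩ : T ⊆ Ω) (U : Finset ↥Ω)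
    (hU : ∀ x, x ∈ U ↔ x.1 ∈ S) :
    (V.map (inclEmb hST)).range.map (V.map (inclEmb hTΩ)) = V.piece Ω U := by
  have hS : S = U.map (Function.Embedding.subtype _) := by
    ext x
    simp only [Finset.mem_map, Function.Embedding.subtype_apply]
    constructor
    · intro hx
      exact ⟨⟨x, hTΩ (hST hx)⟩, (hU _).2 hx, rfl⟩
    · rintro ⟨y, hy, rfl⟩
      exact (hU y).1 hy
  subst hS
  rw [AddMonoidHom.map_range, ← V.map_comp]
  rfl

end FIModule

/-- **Theorem E′** (Church–Ellenberg). Let `V` be a torsion-free FI-module generated in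
degree ≤ d with `I_{K+1} · V_n = 0` for all `n`.  Then for all `n > K + d` and all
`a ≤ n`, `V_{[n]−{1}} + ⋯ + V_{[n]−{a}} = ker (J̃_{[a]} : V_n → V_{[n]⊔[⋆_a]})`. -/
theorem FIModule.sum_erase_eq_ker_Jtilde (V : FIModule) (K d : ℕ)
    (hVtf : V.TorsionFree) (hVgen : V.GenLE d) (hann : V.AnnIdeal (K + 1))
    (n a : ℕ) (hn : n > K + d) (ha : a ≤ n) :
    (⨆ i ∈ Finset.Icc (1 : ℤ) (a : ℤ),
      (V.map (inclEmb (Finset.erase_subset i (Finset.Icc 1 (n : ℤ))))).range) =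
    (V.Jtilde n a ha).ker := by
  classical
  have hsub : Finset.Icc 1 (n : ℤ) ⊆ Finset.Icc (-(n : ℤ)) n :=
    Finset.Icc_subset_Icc (by omega) le_rfl
  have hsub' : Finset.Icc 1 (n : ℤ) ∪ Finset.Icc (-(a : ℤ)) (-1) ⊆ Finset.Icc (-(n : ℤ)) n :=
    Finset.union_subset hsub (Finset.Icc_subset_Icc (by omega) (by omega))
  set P := V.permSystem (Finset.Icc (-(n : ℤ)) n)
  set L := FIModule.labelling n
  -- both sides are compared inside the value at `{-n, …, n}`
  have hA : (⨆ i ∈ Finset.Icc (1 : ℤ) (a : ℤ),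
      (V.map (inclEmb (Finset.erase_subset i (Finset.Icc 1 (n : ℤ))))).range).map
        (V.map (inclEmb hsub)) = P.eraseSum L a := by
    have hpiece : ∀ (i : ↥(Finset.Icc (-(n : ℤ)) n)),
        (V.map (inclEmb (Finset.erase_subset i.1 (Finset.Icc 1 (n : ℤ))))).range.map
        (V.map (inclEmb hsub)) = P.F ((L.seg n).erase i) := by
      intro i
      refine V.range_comp_eq_piece _ _ _ fun x => ?_
      rw [Finset.mem_erase, FIModule.mem_labelling_seg, Finset.mem_erase, Finset.mem_Icc, ne_eq,
        ne_eq, Subtype.ext_iff]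
    simp only [AddSubgroup.map_iSup]
    apply le_antisymm
    · refine iSup₂_le fun i hi => ?_
      rw [Finset.mem_Icc] at hi
      rw [hpiece ⟨i, by rw [Finset.mem_Icc]; omega⟩]
      exact le_iSup₂_of_le (f := fun x (_ : x ∈ L.seg a) => P.F ((L.seg n).erase x)) _
        (FIModule.mem_labelling_seg.2 hi) le_rfl
    · refine iSup₂_le fun x hx => ?_
      rw [← hpiece x]
      exact le_iSup₂_of_le (f := fun i (_ : i ∈ Finset.Icc (1 : ℤ) (a : ℤ)) =>
        (V.map (inclEmb (Finset.erase_subset i (Finset.Icc 1 (n : ℤ))))).range.map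
        (V.map (inclEmb hsub))) x.1
        (Finset.mem_Icc.2 (FIModule.mem_labelling_seg.1 hx)) le_rfl
  have hF : P.F Finset.univ = ⊤ := by
    rw [eq_top_iff]
    intro v _
    exact V.mem_piece.2 ⟨_, Function.Embedding.refl _, v, fun _ => Finset.mem_univ _, by
      rw [V.map_id]; rfl⟩
  ext v
  have hv : V.map (inclEmb hsub) v ∈ P.F (L.seg n) :=
    V.mem_piece.2 ⟨_, _, v, fun s => FIModule.mem_labelling_seg.2 (Finset.mem_Icc.1 s.2), rfl⟩
  have key := P.mem_eraseSum_iff hn ha hF (V.permSystem_gen hVgen)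
    (V.permSystem_ann hann) hv
  have hJ : V.map (inclEmb hsub') (V.Jtilde n a ha v) =
      P.J (L.seg a) L.star (V.map (inclEmb hsub) v) := by
    have h1 : ∀ s : Fin a, ((s : ℕ) : ℤ) + 1 ∈ Finset.Icc (-(n : ℤ)) n := fun s => by
      have := s.isLt
      rw [Finset.mem_Icc]; omega
    rw [P.J_eq_prod (L.good_star (L.seg_mono ha))
      (l := List.ofFn fun s : Fin a => ⟨((s : ℕ) : ℤ) + 1, h1 s⟩), List.map_ofFn]
    · rw [Jtilde, AddMonoidHom.comp_apply, map_compList, map_map]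
      rfl
    · rw [List.nodup_ofFn]
      intro s t h
      have := congrArg Subtype.val h
      dsimp only at this
      omega
    · ext x
      rw [List.mem_toFinset, List.mem_ofFn, FIModule.mem_labelling_seg]
      constructor
      · rintro ⟨s, rfl⟩
        have := s.isLt
        dsimp only
        omega
      · rintro ⟨hx1, hx2⟩
        exact ⟨⟨(x.1 - 1).toNat, by omega⟩, Subtype.ext (by dsimp only; omega)⟩
  rw [AddMonoidHom.mem_ker, ← (injective_iff_map_eq_zero' _).1 (hVtf (inclEmb hsub')), hJ, ← key,
    ← hA, AddSubgroup.mem_map_iff_mem (hVtf (inclEmb hsub))]
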